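/- Let d > 1 be an integer and r > 0. Let X ⊆ ℝ^d be nonempty and suppose A = X^r is nonempty (so A is a nonempty r-ball body). Then the Minkowski sum A + (−A^r) = {a − b : a ∈ A, b ∈ A^r} equals the closed ball B[o, r] of radius r centered at the origin o. -/

import Mathlib

/-! The inclusion `A - A^r ⊆ B[o, r]` is the definition of `A^r`. Since `A - A^r` is convex and
`B[o, r]` is the convex hull of its boundary sphere, the converse only requires `r • u ∈ A - A^r`
for every unit vector `u`. Let `a` maximize `⟪·, u⟫` over the compact set `A`. Then
`A ⊆ B[a - r • u, r]`, that is, `a - r • u ∈ A^r`, and `r • u = a - (a - r • u)`.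

The inclusion `A ⊆ B[a - r • u, r]` comes from the strong convexity of balls
(`mem_closedBall_spindle`): with two points `a`, `a + v`, the set `A` contains the ball of radius
`t (1 - t) |v|² / (2 r)` around `a + t • v`. If `a + v` were outside `B[a - r • u, r]`, then for
small `t > 0` the point of that ball farthest in direction `u` would beat `a`. -/

open Metric Pointwise

noncomputable section

/-- The `r`-ball body generated by a set `X ⊆ ℝ^d`. -/
def ballBody {d : ℕ} (r : ℝ) (X : Set (EuclideanSpace ℝ (Fin d))) :
    Set (EuclideanSpace ℝ (Fin d)) :=
  ⋂ x ∈ X, closedBall x r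

/-- Strong convexity of a ball of radius `r`: if it contains `a` and `a + v`, then it contains the
sphere of radius `t (1 - t) |v|² / (2 r)` around `a + t • v`, parametrized by the unit vector `u`. -/
lemma mem_closedBall_spindle {E : Type*} [NormedAddCommGroup E] [InnerProductSpace ℝ E]
    {r t : ℝ} (hr : 0 < r) (ht0 : 0 ≤ t) (ht1 : t ≤ 1) {a v u c : E} (hu : ‖u‖ = 1)
    (ha : a ∈ closedBall c r) (hv : a + v ∈ closedBall c r) :
    a + t • v + (t * (1 - t) * ‖v‖ ^ 2 / (2 * r)) • u ∈ closedBall c r := by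
  rw [mem_closedBall, dist_eq_norm] at *
  set ρ := t * (1 - t) * ‖v‖ ^ 2 / (2 * r) with hρ
  have hρ0 : 0 ≤ ρ := by
    have : 0 ≤ 1 - t := by linarith
    positivity
  have hρr : 2 * r * ρ = t * (1 - t) * ‖v‖ ^ 2 := by rw [hρ]; field_simp
  have h1 : ‖a - c‖ ^ 2 ≤ r ^ 2 := by gcongr
  have h2 : ‖a - c + v‖ ^ 2 ≤ r ^ 2 := by
    rw [show a - c + v = a + v - c by abel]; gcongr
  have h3 : ‖a - c + t • v‖ ^ 2 ≤ r ^ 2 - 2 * r * ρ := by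
    rw [hρr]
    rw [norm_add_sq_real] at h2 ⊢
    rw [inner_smul_right, norm_smul, mul_pow, Real.norm_eq_abs, sq_abs]
    nlinarith
  have hle : ρ ≤ r := by nlinarith [sq_nonneg ‖a - c + t • v‖]
  have h4 : ‖a - c + t • v‖ ≤ r - ρ := by
    apply le_of_sq_le_sq _ (by linarith)
    nlinarith [sq_nonneg ρ]
  calc ‖a + t • v + ρ • u - c‖ = ‖(a - c + t • v) + ρ • u‖ := by congr 1; abel
    _ ≤ ‖a - c + t • v‖ + ‖ρ • u‖ := norm_add_le _ _
    _ = ‖a - c + t • v‖ + ρ := by rw [norm_smul, hu, Real.norm_of_nonneg hρ0, mul_one]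
    _ ≤ r := by linarith

lemma mem_ballBody {d : ℕ} {r : ℝ} {X : Set (EuclideanSpace ℝ (Fin d))}
    {p : EuclideanSpace ℝ (Fin d)} : p ∈ ballBody r X ↔ ∀ x ∈ X, p ∈ closedBall x r := by
  simp [ballBody]

lemma convex_ballBody {d : ℕ} (r : ℝ) (X : Set (EuclideanSpace ℝ (Fin d))) :
    Convex ℝ (ballBody r X) :=
  convex_iInter₂ fun x _ => convex_closedBall x r

lemma isCompact_ballBody {d : ℕ} (r : ℝ) {X : Set (EuclideanSpace ℝ (Fin d))}
    (hX : X.Nonempty) : IsCompact (ballBody r X) := by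
  obtain ⟨x, hx⟩ := hX
  refine (isCompact_closedBall x r).of_isClosed_subset
    (isClosed_biInter fun _ _ => isClosed_closedBall) fun p hp => mem_ballBody.1 hp x hx

/-- If `u` is an outer unit normal of an `r`-ball body at `a`, then the body lies in the ball of
radius `r` touching the supporting hyperplane at `a` from inside. -/
lemma sub_smul_mem_ballBody_ballBody {d : ℕ} {r : ℝ} (hr : 0 < r)
    {X : Set (EuclideanSpace ℝ (Fin d))} {a u : EuclideanSpace ℝ (Fin d)} (hu : ‖u‖ = 1)
    (ha : a ∈ ballBody r X) (hmax : ∀ y ∈ ballBody r X, inner ℝ y u ≤ inner ℝ a u) :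
    a - r • u ∈ ballBody r (ballBody r X) := by
  refine mem_ballBody.2 fun y hy => ?_
  obtain ⟨v, rfl⟩ : ∃ v, y = a + v := ⟨y - a, by abel⟩
  rw [mem_closedBall', dist_eq_norm, show a + v - (a - r • u) = v + r • u by abel]
  by_contra! hlt
  have hsq : r ^ 2 < ‖v + r • u‖ ^ 2 := by gcongr
  rw [norm_add_sq_real, inner_smul_right, norm_smul, hu, mul_one, Real.norm_eq_abs, sq_abs] at hsq
  have hvu : inner ℝ v u ≤ 0 := by
    have := hmax _ hy
    rw [inner_add_left] at this
    linarith
  set K := ‖v‖ ^ 2 / (2 * r) with hK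
  have hKr : 2 * r * K = ‖v‖ ^ 2 := by rw [hK]; field_simp
  set δ := inner ℝ v u + K with hδ
  have hδ0 : 0 < δ := by
    by_contra! h
    nlinarith
  have hK0 : 0 < K := by linarith
  -- The gain in direction `u` is `t * (δ - t * K)`, which is positive for `0 < t < δ / K`.
  set t := δ / (2 * K) with ht
  have htK : t * K = δ / 2 := by rw [ht]; field_simp
  have ht0 : 0 < t := by positivity
  have ht1 : t ≤ 1 := by
    rw [ht, div_le_one (by positivity)]; linarith
  have hz := hmax _ (mem_ballBody.2 fun c hc => mem_closedBall_spindle hr ht0.le ht1 hu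
    (mem_ballBody.1 ha c hc) (mem_ballBody.1 hy c hc))
  rw [inner_add_left, inner_add_left, real_inner_smul_left, real_inner_smul_left,
    real_inner_self_eq_norm_sq, hu,
    show t * (1 - t) * ‖v‖ ^ 2 / (2 * r) = t * (1 - t) * K by rw [hK]; ring] at hz
  have : t * (δ - t * K) ≤ 0 := by rw [hδ]; linarith
  rw [htK] at this
  nlinarith

/-- Proposition 2.5 of [BeNa]: if `A ⊆ ℝ^d` is a nonempty `r`-ball body, then the Minkowski
sum `A + (−A^r)` equals the closed ball of radius `r` centered at the origin. -/
theorem rBallBody_add_neg_dual {d : ℕ} (hd : 1 < d) {r : ℝ} (hr : 0 < r)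
    {X A : Set (EuclideanSpace ℝ (Fin d))} (hX : X.Nonempty) (hA : A = ballBody r X)
    (hAne : A.Nonempty) :
    A + -(ballBody r A) = closedBall (0 : EuclideanSpace ℝ (Fin d)) r := by
  subst hA
  apply Set.Subset.antisymm
  · rintro _ ⟨a, ha, b, hb, rfl⟩
    have := mem_ballBody.1 (Set.mem_neg.1 hb) a ha
    rw [mem_closedBall', dist_eq_norm, sub_neg_eq_add] at this
    simpa using this
  · have : NeZero d := ⟨by omega⟩
    rw [← convexHull_sphere_eq_closedBall _ hr.le]
    refine convexHull_min (fun p hp => ?_) ((convex_ballBody r X).add (convex_ballBody r _).neg)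
    rw [mem_sphere_zero_iff_norm] at hp
    obtain ⟨a, ha, hmax⟩ := (isCompact_ballBody r hX).exists_isMaxOn hAne
      (f := fun y => inner ℝ y (r⁻¹ • p)) (by fun_prop)
    have hu : ‖r⁻¹ • p‖ = 1 := by
      rw [norm_smul, hp, norm_inv, Real.norm_of_nonneg hr.le, inv_mul_cancel₀ hr.ne']
    have hb := sub_smul_mem_ballBody_ballBody hr hu ha fun y hy => hmax hy
    rw [smul_inv_smul₀ hr.ne'] at hb
    exact ⟨a, ha, -(a - p), Set.neg_mem_neg.2 hb, by simp⟩
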